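/- Let D₅ = ⟨(14532), (12)(34)⟩ ⊂ S₅ act on homogeneous cubic forms in ℂ[x₀, x₁, x₂, x₃] through the pentahedral action: a permutation σ of the five linear forms ℓ₀ = x₀, ℓ₁ = x₁, ℓ₂ = x₂, ℓ₃ = x₃, ℓ₄ = −(x₀ + x₁ + x₂ + x₃) acts on a cubic form by the linear substitution of variables sending ℓ_{i} to ℓ_{σ(i)} for all i (here σ permutes the indices of ℓ₀, …, ℓ₄, identified with the letters 1, …, 5). Then the subspace of degree-3 forms invariant under every element of D₅ has dimension 2. -/

import Mathlib

open MvPolynomial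

noncomputable section

/-- The five linear forms of the pentahedron: `ℓ₀ = x₀, ℓ₁ = x₁, ℓ₂ = x₂, ℓ₃ = x₃,`
`ℓ₄ = -(x₀ + x₁ + x₂ + x₃)`; they satisfy `ℓ₀ + ℓ₁ + ℓ₂ + ℓ₃ + ℓ₄ = 0`. -/
def pentForm : Fin 5 → MvPolynomial (Fin 4) ℂ :=
  ![X 0, X 1, X 2, X 3, -(X 0 + X 1 + X 2 + X 3)]

/-- The pentahedral action of a permutation `σ ∈ S₅` on polynomials in `x₀, …, x₃`:
the linear substitution of the variables sending `ℓᵢ` to `ℓ_{σ(i)}` for all `i`. -/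
def pentAct (σ : Equiv.Perm (Fin 5)) :
    MvPolynomial (Fin 4) ℂ →ₐ[ℂ] MvPolynomial (Fin 4) ℂ :=
  aeval fun i : Fin 4 => pentForm (σ i.castSucc)

/-- The 5-cycle `(14532)`, written on the indices `0, …, 4` of `ℓ₀, …, ℓ₄` (identifying the
letters `1, …, 5` with `0, …, 4`): `0 ↦ 3 ↦ 4 ↦ 2 ↦ 1 ↦ 0`. -/
def cyc5 : Equiv.Perm (Fin 5) :=
  ⟨fun i => ![3, 0, 1, 4, 2] i, fun i => ![1, 2, 4, 0, 3] i, by decide, by decide⟩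

/-- The double transposition `(12)(34)`, written on the indices `0, …, 4`:
`0 ↔ 1`, `2 ↔ 3`. -/
def dtrans : Equiv.Perm (Fin 5) :=
  ⟨fun i => ![1, 0, 3, 2, 4] i, fun i => ![1, 0, 3, 2, 4] i, by decide, by decide⟩

/-- The substitution by the 5-cycle. -/
abbrev actC : MvPolynomial (Fin 4) ℂ →ₐ[ℂ] MvPolynomial (Fin 4) ℂ := pentAct cyc5

/-- The substitution by the double transposition. -/
abbrev actD : MvPolynomial (Fin 4) ℂ →ₐ[ℂ] MvPolynomial (Fin 4) ℂ := pentAct dtrans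

/-- The sum of the cubes of the five forms. -/
def cubeSum : MvPolynomial (Fin 4) ℂ :=
  X 0 ^ 3 + X 1 ^ 3 + X 2 ^ 3 + X 3 ^ 3 + (-(X 0 + X 1 + X 2 + X 3)) ^ 3

/-- The sum of `a²b` over ordered pairs of adjacent vertices of the pentagon `0,3,4,2,1`. -/
def adjSum : MvPolynomial (Fin 4) ℂ :=
  X 0 ^ 2 * (X 1 + X 3) + X 3 ^ 2 * (X 0 + -(X 0 + X 1 + X 2 + X 3))
    + (-(X 0 + X 1 + X 2 + X 3)) ^ 2 * (X 3 + X 2)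
    + X 2 ^ 2 * (-(X 0 + X 1 + X 2 + X 3) + X 1) + X 1 ^ 2 * (X 2 + X 0)

lemma pentAct_form (σ : Equiv.Perm (Fin 5)) (i : Fin 5) :
    pentAct σ (pentForm i) = pentForm (σ i) := by
  have hs : ∑ j, pentForm (σ j) = 0 := by
    rw [Equiv.sum_comp σ pentForm]
    simp [Fin.sum_univ_five, pentForm]
  have hX : ∀ j : Fin 4, pentAct σ (X j) = pentForm (σ j.castSucc) := by
    intro j; simp [pentAct]
  rw [Fin.sum_univ_five] at hs
  have h0 := hX 0
  have h1 := hX 1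
  have h2 := hX 2
  have h3 := hX 3
  fin_cases i
  · exact h0
  · exact h1
  · exact h2
  · exact h3
  · change pentAct σ (-(X 0 + X 1 + X 2 + X 3)) = pentForm (σ 4)
    rw [map_neg, map_add, map_add, map_add, h0, h1, h2, h3]
    change -(pentForm (σ 0) + pentForm (σ 1) + pentForm (σ 2) + pentForm (σ 3)) = _
    linear_combination -hs

lemma pentAct_X (σ : Equiv.Perm (Fin 5)) (j : Fin 4) :
    pentAct σ (X j) = pentForm (σ j.castSucc) := by
  simp [pentAct]

lemma pentAct_mul (σ τ : Equiv.Perm (Fin 5)) (p : MvPolynomial (Fin 4) ℂ) :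
    pentAct (σ * τ) p = pentAct σ (pentAct τ p) := by
  have : pentAct (σ * τ) = (pentAct σ).comp (pentAct τ) := by
    apply MvPolynomial.algHom_ext
    intro i
    rw [AlgHom.comp_apply, pentAct_X, pentAct_X, pentAct_form]
    rfl
  rw [this]; rfl

lemma pentAct_one (p : MvPolynomial (Fin 4) ℂ) : pentAct 1 p = p := by
  have : pentAct 1 = AlgHom.id ℂ _ := by
    apply MvPolynomial.algHom_ext
    intro i
    rw [pentAct_X]
    fin_cases i <;> rfl
  rw [this]; rfl

lemma invariant_of_gens (p : MvPolynomial (Fin 4) ℂ) (hC : actC p = p) (hD : actD p = p) :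
    ∀ σ ∈ Subgroup.closure {cyc5, dtrans}, pentAct σ p = p := by
  intro σ hσ
  induction hσ using Subgroup.closure_induction with
  | mem x hx =>
    rcases hx with rfl | hx
    · exact hC
    · rw [Set.mem_singleton_iff.mp hx]; exact hD
  | one => exact pentAct_one p
  | mul x y _ _ hx hy => rw [pentAct_mul, hy, hx]
  | inv x _ hx =>
    conv_lhs => rw [← hx]
    rw [← pentAct_mul, inv_mul_cancel, pentAct_one]

lemma C0 : actC (X 0) = X 3 := pentAct_X _ _
lemma C1 : actC (X 1) = X 0 := pentAct_X _ _
lemma C2 : actC (X 2) = X 1 := pentAct_X _ _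
lemma C3 : actC (X 3) = -(X 0 + X 1 + X 2 + X 3) := pentAct_X _ _
lemma D0 : actD (X 0) = X 1 := pentAct_X _ _
lemma D1 : actD (X 1) = X 0 := pentAct_X _ _
lemma D2 : actD (X 2) = X 3 := pentAct_X _ _
lemma D3 : actD (X 3) = X 2 := pentAct_X _ _

lemma C_cube : actC cubeSum = cubeSum := by
  simp only [cubeSum, map_add, map_neg, map_pow, C0, C1, C2, C3]; ring
lemma D_cube : actD cubeSum = cubeSum := by
  simp only [cubeSum, map_add, map_neg, map_pow, D0, D1, D2, D3]; ring
lemma C_adj : actC adjSum = adjSum := by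
  simp only [adjSum, map_add, map_neg, map_pow, map_mul, C0, C1, C2, C3]; ring
lemma D_adj : actD adjSum = adjSum := by
  simp only [adjSum, map_add, map_neg, map_pow, map_mul, D0, D1, D2, D3]; ring

/-- Thirty times the averaging operator over the group. -/
def avg : MvPolynomial (Fin 4) ℂ →ₗ[ℂ] MvPolynomial (Fin 4) ℂ :=
  let C := actC.toLinearMap
  let D := actD.toLinearMap
  (3 : ℂ) • ((LinearMap.id + C + C ∘ₗ C + C ∘ₗ C ∘ₗ C + C ∘ₗ C ∘ₗ C ∘ₗ C) ∘ₗ (LinearMap.id + D))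

lemma avg_apply (p : MvPolynomial (Fin 4) ℂ) : avg p = (3 : ℂ) •
    ((p + actD p) + actC (p + actD p) + actC (actC (p + actD p)) + actC (actC (actC (p + actD p)))
      + actC (actC (actC (actC (p + actD p))))) := rfl

lemma mem_of_int {q : MvPolynomial (Fin 4) ℂ} (a b : ℤ)
    (h : q = (a : MvPolynomial (Fin 4) ℂ) * cubeSum + (b : MvPolynomial (Fin 4) ℂ) * adjSum) :
    q ∈ Submodule.span ℂ {cubeSum, adjSum} := by
  rw [Submodule.mem_span_pair]
  refine ⟨a, b, ?_⟩
  rw [h]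
  simp [MvPolynomial.smul_eq_C_mul]

/-- The averages of the monomials of degree three, sorted. -/
lemma avg_mem_sorted (i j k : Fin 4) (hij : i ≤ j) (hjk : j ≤ k) :
    avg (X i * X j * X k) ∈ Submodule.span ℂ {cubeSum, adjSum} := by
  fin_cases i <;> fin_cases j <;> first | (exfalso; revert hij; decide) | skip
  all_goals fin_cases k <;> first | (exfalso; revert hjk; decide) | skip
  all_goals
    simp only [Fin.zero_eta, Fin.mk_one, Fin.reduceFinMk, Fin.isValue]
    rw [avg_apply]
    simp only [map_add, map_mul, map_neg, C0, C1, C2, C3, D0, D1, D2, D3]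
    rw [MvPolynomial.smul_eq_C_mul, map_ofNat]
    first
      | (refine mem_of_int 6 0 ?_; simp only [cubeSum, adjSum]; push_cast; ring1)
      | (refine mem_of_int 0 3 ?_; simp only [cubeSum, adjSum]; push_cast; ring1)
      | (refine mem_of_int (-3) (-3) ?_; simp only [cubeSum, adjSum]; push_cast; ring1)
      | (refine mem_of_int (-2) (-6) ?_; simp only [cubeSum, adjSum]; push_cast; ring1)
      | (refine mem_of_int 4 6 ?_; simp only [cubeSum, adjSum]; push_cast; ring1)

lemma avg_mem (i j k : Fin 4) :
    avg (X i * X j * X k) ∈ Submodule.span ℂ {cubeSum, adjSum} := by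
  rcases le_total i j with h1 | h1 <;> rcases le_total j k with h2 | h2 <;>
    rcases le_total i k with h3 | h3
  · exact avg_mem_sorted i j k h1 h2
  · exact avg_mem_sorted i j k h1 h2
  · convert avg_mem_sorted i k j h3 h2 using 2; ring
  · convert avg_mem_sorted k i j h3 h1 using 2; ring
  · convert avg_mem_sorted j i k h1 h3 using 2; ring
  · convert avg_mem_sorted j k i h2 h3 using 2; ring
  · convert avg_mem_sorted k j i h2 h1 using 2; ring
  · convert avg_mem_sorted k j i h2 h1 using 2; ring

lemma split_off (d : Fin 4 →₀ ℕ) (n : ℕ) (h : d.degree = n + 1) :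
    ∃ i : Fin 4, ∃ e : Fin 4 →₀ ℕ, e.degree = n ∧ d = e + Finsupp.single i 1 := by
  have hd : d ≠ 0 := by rintro rfl; simp at h
  obtain ⟨i, hi⟩ := Finsupp.ne_iff.mp hd
  have hle : Finsupp.single i 1 ≤ d := by
    rw [Finsupp.single_le_iff]; exact Nat.one_le_iff_ne_zero.mpr hi
  have he : d = (d - Finsupp.single i 1) + Finsupp.single i 1 := (tsub_add_cancel_of_le hle).symm
  refine ⟨i, d - Finsupp.single i 1, ?_, he⟩
  rw [he, map_add, Finsupp.degree_single] at h
  omega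

lemma monomial_cubic (d : Fin 4 →₀ ℕ) (h : d.degree = 3) :
    ∃ i j k : Fin 4, (monomial d (1 : ℂ)) = X i * X j * X k := by
  obtain ⟨k, e, he, rfl⟩ := split_off d 2 h
  obtain ⟨j, e', he', rfl⟩ := split_off e 1 he
  obtain ⟨i, e'', he'', rfl⟩ := split_off e' 0 he'
  have : e'' = 0 := (Finsupp.degree_eq_zero_iff _).mp he''
  subst this
  refine ⟨i, j, k, ?_⟩
  simp [X, monomial_mul]

lemma avg_mem_of_homogeneous (p : MvPolynomial (Fin 4) ℂ) (hp : p.IsHomogeneous 3) :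
    avg p ∈ Submodule.span ℂ {cubeSum, adjSum} := by
  rw [p.as_sum, map_sum]
  refine Submodule.sum_mem _ fun d hd => ?_
  have h3 : d.degree = 3 := by
    have := hp (mem_support_iff.mp hd)
    rw [Finsupp.degree_eq_weight_one]; exact this
  obtain ⟨i, j, k, h⟩ := monomial_cubic d h3
  have : monomial d (coeff d p) = coeff d p • monomial d (1 : ℂ) := by
    rw [smul_monomial, smul_eq_mul, mul_one]
  rw [this, map_smul, h]
  exact Submodule.smul_mem _ _ (avg_mem i j k)

lemma ell4_hom : (-(X 0 + X 1 + X 2 + X 3) : MvPolynomial (Fin 4) ℂ).IsHomogeneous 1 :=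
  ((((isHomogeneous_X _ _).add (isHomogeneous_X _ _)).add (isHomogeneous_X _ _)).add
    (isHomogeneous_X _ _)).neg

lemma cube_hom : cubeSum.IsHomogeneous 3 := by
  have hX : ∀ i : Fin 4, (X i ^ 3 : MvPolynomial (Fin 4) ℂ).IsHomogeneous 3 :=
    fun i => (isHomogeneous_X ℂ i).pow 3
  exact ((((hX 0).add (hX 1)).add (hX 2)).add (hX 3)).add (ell4_hom.pow 3)

lemma adj_hom : adjSum.IsHomogeneous 3 := by
  have hX : ∀ i : Fin 4, (X i : MvPolynomial (Fin 4) ℂ).IsHomogeneous 1 := isHomogeneous_X ℂ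
  have key : ∀ a b c : MvPolynomial (Fin 4) ℂ, a.IsHomogeneous 1 → b.IsHomogeneous 1 →
      c.IsHomogeneous 1 → (a ^ 2 * (b + c)).IsHomogeneous 3 :=
    fun a b c ha hb hc => (ha.pow 2).mul (hb.add hc)
  exact ((((key _ _ _ (hX 0) (hX 1) (hX 3)).add (key _ _ _ (hX 3) (hX 0) ell4_hom)).add
    (key _ _ _ ell4_hom (hX 3) (hX 2))).add (key _ _ _ (hX 2) ell4_hom (hX 1))).add
    (key _ _ _ (hX 1) (hX 2) (hX 0))

lemma indep : LinearIndependent ℂ ![cubeSum, adjSum] := by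
  rw [LinearIndependent.pair_iff]
  intro s t h
  have h2 := congrArg (eval ![1, 1, 1, 0]) h
  have h3 := congrArg (eval ![1, 1, 0, 0]) h
  simp [cubeSum, adjSum, smul_eval] at h2 h3
  norm_num at h2 h3
  constructor
  · grind
  · grind

/-- The space of cubic forms invariant under the pentahedral action of every element of
the dihedral group `D₅ = ⟨(14532), (12)(34)⟩ ⊂ S₅` has dimension 2. -/
theorem D5_invariant_cubics_two_dimensional :
    ∃ f g : MvPolynomial (Fin 4) ℂ, LinearIndependent ℂ ![f, g] ∧
      {p : MvPolynomial (Fin 4) ℂ | p.IsHomogeneous 3 ∧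
          ∀ σ ∈ Subgroup.closure {cyc5, dtrans}, pentAct σ p = p} =
        ↑(Submodule.span ℂ {f, g}) := by
  refine ⟨cubeSum, adjSum, indep, ?_⟩
  ext p
  simp only [Set.mem_ofPred_eq, SetLike.mem_coe]
  constructor
  · rintro ⟨hp, hinv⟩
    have hC : actC p = p := hinv _ (Subgroup.subset_closure (by simp))
    have hD : actD p = p := hinv _ (Subgroup.subset_closure (by simp))
    have h30 : avg p = (30 : ℂ) • p := by
      rw [avg_apply, hD, map_add, hC, map_add, hC, map_add, hC, map_add, hC]
      module
    have := Submodule.smul_mem _ (30 : ℂ)⁻¹ (avg_mem_of_homogeneous p hp)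
    rwa [h30, smul_smul, inv_mul_cancel₀ (by norm_num), one_smul] at this
  · intro hp
    obtain ⟨a, b, rfl⟩ := Submodule.mem_span_pair.mp hp
    constructor
    · rw [MvPolynomial.smul_eq_C_mul, MvPolynomial.smul_eq_C_mul]
      simpa using (cube_hom.C_mul a).add (adj_hom.C_mul b)
    · apply invariant_of_gens
      · rw [map_add, map_smul, map_smul, C_cube, C_adj]
      · rw [map_add, map_smul, map_smul, D_cube, D_adj]
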